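/- Lower bound on the lower-value SDP (Proposition 3, lower half): assume P* is a symmetric n×n matrix with 𝓡(P*) = 0, and set L* = γ⁻²B_wᵀP*. Fix x_0 ∈ ℝⁿ. Then every symmetric positive semidefinite (n+m)×(n+m) matrix Z, partitioned into blocks Z₁₁ (n×n), Z₁₂ (n×m), Z₂₂ (m×m), that satisfies x_0x_0ᵀ + (A+B_wL*)Z₁₁ + BZ₁₂ᵀ + Z₁₁(A+B_wL*)ᵀ + Z₁₂Bᵀ = 0 obeys Tr((Q − γ²(L*)ᵀL*) Z₁₁) + Tr(R Z₂₂) ≥ x_0ᵀP*x_0. -/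

import Mathlib

open Matrix

/-!
Weak duality for a linear-quadratic problem. Pairing the Lyapunov constraint with `P` and completing
the square with the feedback gain `K = R⁻¹BᴴP` shows that the cost of a feasible `Z` exceeds
`x₀ᴴPx₀` by exactly `tr (𝓡(P) Z₁₁) + tr (R M)`, where `M = [K I] Z [K I]ᴴ` is positive semidefinite;
both terms are traces of products of positive semidefinite matrices once `𝓡(P)` is positive
semidefinite. Closing the loop with the worst-case disturbance gain `L` turns the game Riccati
operator into the ordinary one for the drift `A + B_w L` and the state weight `Q - γ² LᴴL`.
-/

section CompletionOfSquares

variable {ι κ 𝕜 : Type*} [Fintype ι] [Fintype κ]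

/-- The Riccati operator of the linear-quadratic regulator with drift `F`, input matrix `B`, state
weight `S` and input weight `R`. The inverse is the junk value `0` if `R` is singular. -/
noncomputable def lqRiccati [DecidableEq κ] [CommRing 𝕜] [StarRing 𝕜] (F : Matrix ι ι 𝕜)
    (B : Matrix ι κ 𝕜) (S : Matrix ι ι 𝕜) (R : Matrix κ κ 𝕜) (P : Matrix ι ι 𝕜) : Matrix ι ι 𝕜 :=
  Fᴴ * P + P * F + S - P * B * R⁻¹ * Bᴴ * P

/-- The second moment of `u + K x` when the blocks `Z₁₁`, `Z₁₂`, `Z₁₂ᴴ`, `Z₂₂` are the joint second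
moments of a state `x` and an input `u`: how far the input is from the feedback `u = -K x`. -/
def feedbackResidual [Semiring 𝕜] [StarRing 𝕜] (K : Matrix κ ι 𝕜) (Z₁₁ : Matrix ι ι 𝕜)
    (Z₁₂ : Matrix ι κ 𝕜) (Z₂₂ : Matrix κ κ 𝕜) : Matrix κ κ 𝕜 :=
  K * Z₁₁ * Kᴴ + K * Z₁₂ + Z₁₂ᴴ * Kᴴ + Z₂₂

theorem fromCols_one_mul_fromBlocks_mul_conjTranspose [DecidableEq κ] [Semiring 𝕜] [StarRing 𝕜]
    (K : Matrix κ ι 𝕜) (Z₁₁ : Matrix ι ι 𝕜) (Z₁₂ : Matrix ι κ 𝕜) (Z₂₂ : Matrix κ κ 𝕜) :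
    fromCols K (1 : Matrix κ κ 𝕜) * fromBlocks Z₁₁ Z₁₂ Z₁₂ᴴ Z₂₂ *
        (fromCols K (1 : Matrix κ κ 𝕜))ᴴ =
      feedbackResidual K Z₁₁ Z₁₂ Z₂₂ := by
  rw [conjTranspose_fromCols_eq_fromRows_conjTranspose, fromCols_mul_fromBlocks,
    fromCols_mul_fromRows, feedbackResidual]
  simp only [Matrix.one_mul, Matrix.mul_one, conjTranspose_one, Matrix.add_mul]
  abel

theorem trace_mul_feedbackResidual [CommSemiring 𝕜] [StarRing 𝕜] (R : Matrix κ κ 𝕜)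
    (K : Matrix κ ι 𝕜) (Z₁₁ : Matrix ι ι 𝕜) (Z₁₂ : Matrix ι κ 𝕜) (Z₂₂ : Matrix κ κ 𝕜) :
    (R * feedbackResidual K Z₁₁ Z₁₂ Z₂₂).trace =
      (Kᴴ * R * K * Z₁₁).trace + (R * K * Z₁₂).trace + (Kᴴ * R * Z₁₂ᴴ).trace
        + (R * Z₂₂).trace := by
  have quadratic : (R * (K * Z₁₁ * Kᴴ)).trace = (Kᴴ * R * K * Z₁₁).trace := by
    rw [← Matrix.mul_assoc, trace_mul_comm]
    simp only [Matrix.mul_assoc]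
  have cross : (R * (Z₁₂ᴴ * Kᴴ)).trace = (Kᴴ * R * Z₁₂ᴴ).trace := by
    rw [← Matrix.mul_assoc, trace_mul_comm, ← Matrix.mul_assoc]
  simp only [feedbackResidual, Matrix.mul_add, trace_add, quadratic, cross,
    Matrix.mul_assoc R K Z₁₂]

theorem trace_mul_lyapunov [CommSemiring 𝕜] [StarRing 𝕜] (P F X Z₁₁ : Matrix ι ι 𝕜)
    (B Z₁₂ : Matrix ι κ 𝕜) :
    (P * (X + F * Z₁₁ + B * Z₁₂ᴴ + Z₁₁ * Fᴴ + Z₁₂ * Bᴴ)).trace =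
      (P * X).trace + ((Fᴴ * P + P * F) * Z₁₁).trace + (P * B * Z₁₂ᴴ).trace
        + (Bᴴ * P * Z₁₂).trace := by
  have drift : (P * (Z₁₁ * Fᴴ)).trace = (Fᴴ * P * Z₁₁).trace := by
    rw [← Matrix.mul_assoc, trace_mul_cycle]
  have input : (P * (Z₁₂ * Bᴴ)).trace = (Bᴴ * P * Z₁₂).trace := by
    rw [← Matrix.mul_assoc, trace_mul_cycle]
  simp only [Matrix.mul_add, Matrix.add_mul, trace_add, drift, input, Matrix.mul_assoc]
  ring

theorem lq_cost_eq_of_lyapunov_eq_zero [DecidableEq κ] [CommRing 𝕜] [StarRing 𝕜]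
    {F S P X Z₁₁ : Matrix ι ι 𝕜} {B Z₁₂ : Matrix ι κ 𝕜} {R : Matrix κ κ 𝕜} (Z₂₂ : Matrix κ κ 𝕜)
    (hR : R.IsHermitian) (hRunit : IsUnit R.det) (hP : P.IsHermitian)
    (hZ : X + F * Z₁₁ + B * Z₁₂ᴴ + Z₁₁ * Fᴴ + Z₁₂ * Bᴴ = 0) :
    (S * Z₁₁).trace + (R * Z₂₂).trace =
      (P * X).trace + (lqRiccati F B S R P * Z₁₁).trace
        + (R * feedbackResidual (R⁻¹ * Bᴴ * P) Z₁₁ Z₁₂ Z₂₂).trace := by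
  set K := R⁻¹ * Bᴴ * P with hK
  have hRK : R * K = Bᴴ * P := by
    rw [hK, Matrix.mul_assoc, mul_nonsing_inv_cancel_left _ _ hRunit]
  have hKR : Kᴴ * R = P * B := by
    simpa only [conjTranspose_mul, conjTranspose_conjTranspose, hR.eq, hP.eq]
      using congrArg conjTranspose hRK
  have hKRK : Kᴴ * R * K = P * B * R⁻¹ * Bᴴ * P := by
    rw [hKR, hK]
    simp only [Matrix.mul_assoc]
  have hlyapunov := trace_mul_lyapunov P F X Z₁₁ B Z₁₂
  rw [hZ, Matrix.mul_zero, trace_zero] at hlyapunov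
  rw [trace_mul_feedbackResidual, hKRK, hRK, hKR, lqRiccati, Matrix.sub_mul, trace_sub,
    Matrix.add_mul _ S, trace_add]
  linear_combination hlyapunov

end CompletionOfSquares

section Positivity

open scoped ComplexOrder

variable {ι κ 𝕜 : Type*} [Fintype ι] [RCLike 𝕜]

theorem trace_mul_nonneg_of_posSemidef {M N : Matrix ι ι 𝕜} (hM : M.PosSemidef)
    (hN : N.PosSemidef) : 0 ≤ (M * N).trace := by
  classical
  obtain ⟨C, rfl⟩ : ∃ C : Matrix ι ι 𝕜, M = Cᴴ * C := by
    open scoped MatrixOrder in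
    exact CStarAlgebra.nonneg_iff_eq_star_mul_self.mp hM.nonneg
  rw [← trace_mul_cycle]
  exact (hN.mul_mul_conjTranspose_same C).trace_nonneg

theorem posSemidef_feedbackResidual [Finite κ] {Z₁₁ : Matrix ι ι 𝕜} {Z₁₂ : Matrix ι κ 𝕜}
    {Z₂₂ : Matrix κ κ 𝕜} (hZ : (fromBlocks Z₁₁ Z₁₂ Z₁₂ᴴ Z₂₂).PosSemidef) (K : Matrix κ ι 𝕜) :
    (feedbackResidual K Z₁₁ Z₁₂ Z₂₂).PosSemidef := by
  classical
  cases nonempty_fintype κ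
  rw [← fromCols_one_mul_fromBlocks_mul_conjTranspose]
  exact hZ.mul_mul_conjTranspose_same _

theorem trace_mul_le_lq_cost [Fintype κ] [DecidableEq κ] {F S P X Z₁₁ : Matrix ι ι 𝕜}
    {B Z₁₂ : Matrix ι κ 𝕜} {R Z₂₂ : Matrix κ κ 𝕜} (hR : R.PosDef) (hP : P.IsHermitian)
    (hRiccati : (lqRiccati F B S R P).PosSemidef)
    (hZ : (fromBlocks Z₁₁ Z₁₂ Z₁₂ᴴ Z₂₂).PosSemidef)
    (hfeas : X + F * Z₁₁ + B * Z₁₂ᴴ + Z₁₁ * Fᴴ + Z₁₂ * Bᴴ = 0) :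
    (P * X).trace ≤ (S * Z₁₁).trace + (R * Z₂₂).trace := by
  have hZ₁₁ : Z₁₁.PosSemidef := hZ.submatrix Sum.inl
  have hRunit : IsUnit R.det := (isUnit_iff_isUnit_det R).mp hR.isUnit
  rw [lq_cost_eq_of_lyapunov_eq_zero Z₂₂ hR.isHermitian hRunit hP hfeas, add_assoc]
  exact le_add_of_nonneg_right <| add_nonneg
    (trace_mul_nonneg_of_posSemidef hRiccati hZ₁₁)
    (trace_mul_nonneg_of_posSemidef hR.posSemidef (posSemidef_feedbackResidual hZ _))

end Positivity

section Game

open scoped ComplexOrder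

variable {ι κ μ 𝕜 : Type*} [Fintype ι] [Fintype κ] [Fintype μ] [DecidableEq κ] [RCLike 𝕜]

/-- The game Riccati operator `𝓡`, with the real attenuation level `γ` acting on `𝕜`-matrices by
scalar multiplication. -/
noncomputable def gameRiccati (A : Matrix ι ι 𝕜) (B : Matrix ι κ 𝕜) (Bw : Matrix ι μ 𝕜)
    (Q : Matrix ι ι 𝕜) (R : Matrix κ κ 𝕜) (γ : ℝ) (P : Matrix ι ι 𝕜) : Matrix ι ι 𝕜 :=
  lqRiccati A B Q R P + (γ ^ 2)⁻¹ • (P * Bw * Bwᴴ * P)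

/-- The gain `L` of the worst-case disturbance `w = L x` associated with the value matrix `P`. -/
noncomputable def worstCaseGain (Bw : Matrix ι μ 𝕜) (γ : ℝ) (P : Matrix ι ι 𝕜) : Matrix μ ι 𝕜 :=
  (γ ^ 2)⁻¹ • (Bwᴴ * P)

theorem lqRiccati_worstCaseGain (A : Matrix ι ι 𝕜) (B : Matrix ι κ 𝕜) (Bw : Matrix ι μ 𝕜)
    (Q : Matrix ι ι 𝕜) (R : Matrix κ κ 𝕜) {γ : ℝ} (hγ : γ ≠ 0) {P : Matrix ι ι 𝕜}
    (hP : P.IsHermitian) :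
    lqRiccati (A + Bw * worstCaseGain Bw γ P) B
        (Q - γ ^ 2 • ((worstCaseGain Bw γ P)ᴴ * worstCaseGain Bw γ P)) R P =
      gameRiccati A B Bw Q R γ P := by
  have hadj : (worstCaseGain Bw γ P)ᴴ = (γ ^ 2)⁻¹ • (P * Bw) := by
    rw [worstCaseGain, conjTranspose_smul, conjTranspose_mul, conjTranspose_conjTranspose, hP.eq,
      star_trivial]
  have hweight : γ ^ 2 • ((worstCaseGain Bw γ P)ᴴ * worstCaseGain Bw γ P) =
      (γ ^ 2)⁻¹ • (P * Bw * Bwᴴ * P) := by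
    rw [hadj, worstCaseGain, Matrix.smul_mul, smul_inv_smul₀ (pow_ne_zero 2 hγ), Matrix.mul_smul]
    simp only [Matrix.mul_assoc]
  rw [gameRiccati, lqRiccati, lqRiccati, hweight, conjTranspose_add, conjTranspose_mul, hadj,
    worstCaseGain]
  simp only [Matrix.add_mul, Matrix.mul_add, Matrix.smul_mul, Matrix.mul_smul, Matrix.mul_assoc]
  abel

theorem lower_value_sdp_bound_general (A : Matrix ι ι 𝕜) (B : Matrix ι κ 𝕜) (Bw : Matrix ι μ 𝕜)
    (Q : Matrix ι ι 𝕜) {R : Matrix κ κ 𝕜} (hR : R.PosDef) {γ : ℝ} (hγ : γ ≠ 0)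
    {P : Matrix ι ι 𝕜} (hP : P.IsHermitian) (hRiccati : (gameRiccati A B Bw Q R γ P).PosSemidef)
    (x₀ : ι → 𝕜) {Z₁₁ : Matrix ι ι 𝕜} {Z₁₂ : Matrix ι κ 𝕜} {Z₂₂ : Matrix κ κ 𝕜}
    (hZ : (fromBlocks Z₁₁ Z₁₂ Z₁₂ᴴ Z₂₂).PosSemidef)
    (hfeas : vecMulVec x₀ (star x₀) + (A + Bw * worstCaseGain Bw γ P) * Z₁₁ + B * Z₁₂ᴴ
      + Z₁₁ * (A + Bw * worstCaseGain Bw γ P)ᴴ + Z₁₂ * Bᴴ = 0) :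
    star x₀ ⬝ᵥ P *ᵥ x₀ ≤
      ((Q - γ ^ 2 • ((worstCaseGain Bw γ P)ᴴ * worstCaseGain Bw γ P)) * Z₁₁).trace
        + (R * Z₂₂).trace := by
  have hvalue : (P * vecMulVec x₀ (star x₀)).trace = star x₀ ⬝ᵥ P *ᵥ x₀ := by
    rw [mul_vecMulVec, trace_vecMulVec, dotProduct_comm]
  rw [← lqRiccati_worstCaseGain A B Bw Q R hγ hP] at hRiccati
  exact hvalue ▸ trace_mul_le_lq_cost hR hP hRiccati hZ hfeas

end Game

/-- Lower bound on the lower-value SDP (Proposition 3, lower half). -/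
theorem lower_value_sdp_bound {n m p : ℕ}
    (A : Matrix (Fin n) (Fin n) ℝ) (B : Matrix (Fin n) (Fin m) ℝ)
    (Bw : Matrix (Fin n) (Fin p) ℝ)
    (Q : Matrix (Fin n) (Fin n) ℝ) (hQ : Q.IsSymm)
    (R : Matrix (Fin m) (Fin m) ℝ) (hR : R.PosDef) (hRsymm : R.IsSymm)
    (γ : ℝ) (hγ : 0 < γ)
    (Ps : Matrix (Fin n) (Fin n) ℝ) (hPs : Ps.IsSymm)
    (hARE : Aᵀ * Ps + Ps * A + Q - Ps * B * R⁻¹ * Bᵀ * Ps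
      + (γ ^ 2)⁻¹ • (Ps * Bw * Bwᵀ * Ps) = 0)
    (x0 : Fin n → ℝ)
    (Z₁₁ : Matrix (Fin n) (Fin n) ℝ) (Z₁₂ : Matrix (Fin n) (Fin m) ℝ)
    (Z₂₂ : Matrix (Fin m) (Fin m) ℝ)
    (hZ : (fromBlocks Z₁₁ Z₁₂ Z₁₂ᵀ Z₂₂).PosSemidef)
    (hfeas : vecMulVec x0 x0
      + (A + Bw * ((γ ^ 2)⁻¹ • (Bwᵀ * Ps))) * Z₁₁ + B * Z₁₂ᵀ
      + Z₁₁ * (A + Bw * ((γ ^ 2)⁻¹ • (Bwᵀ * Ps)))ᵀ + Z₁₂ * Bᵀ = 0) :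
    x0 ⬝ᵥ Ps *ᵥ x0 ≤
      ((Q - γ ^ 2 • (((γ ^ 2)⁻¹ • (Bwᵀ * Ps))ᵀ * ((γ ^ 2)⁻¹ • (Bwᵀ * Ps)))) * Z₁₁).trace
        + (R * Z₂₂).trace := by
  simp only [← conjTranspose_eq_transpose_of_trivial] at hARE hZ hfeas ⊢
  exact lower_value_sdp_bound_general A B Bw Q hR hγ.ne' hPs
    (by simpa only [gameRiccati, lqRiccati, hARE] using PosSemidef.zero) x0 hZ hfeas
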